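/- arXiv:1312.1991 — 3 statements merged into one kernel-verified Lean document; each statement's English description precedes it below -/
import Mathlib

section
/- Let g : (0,1] → [0,∞) be non-increasing and integrable, let p > 1 and δ ∈ (0,1). Then ∫₀^δ ((1/t)∫₀^t g(u) du)^p dt + (1/(p−1)) · (1/δ^{p−1}) · (∫₀^δ g(u) du)^p = (p/(p−1)) ∫₀^δ ((1/t)∫₀^t g(u) du)^{p−1} g(t) dt, as an equality of values in [0,∞]. -/
/-!
Truncating `g` at height `n` and extending it to an antitone function on `ℝ` reduces the identity
to bounded antitone functions: all the integrals in it are monotone limits of those of the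
truncations, so the case where both sides are infinite needs no separate treatment.

For a bounded antitone `f` with primitive `G t = ∫₀ᵗ f` and average `A t = G t / t`, the function
`t * A t ^ p` is continuous on `[0, δ]`, vanishes at `0` because `A` is bounded, and has derivative
`(1 - p) * A t ^ p + p * A t ^ (p - 1) * f t` at every point of continuity of `f`, hence off a
countable set. The fundamental theorem of calculus then gives the identity (`hardy_real`), which
`hardy_bounded` transfers to `[0, ∞]`-valued integrals.
-/

open MeasureTheory Set
open scoped ENNReal NNReal

/-- The average `(1/t) ∫₀^t g(u) du` of a nonnegative function `g` over `(0, t]`,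
taken with values in `[0, ∞]`. -/
noncomputable def hardyAvg (g : ℝ → ℝ≥0) (t : ℝ) : ℝ≥0∞ :=
  (ENNReal.ofReal t)⁻¹ * ∫⁻ u in Set.Ioc (0 : ℝ) t, (g u : ℝ≥0∞)

/-- `g` itself may be non-measurable: `t ↦ ∫⁻ u in Ioc 0 t, g u` is monotone. -/
lemma measurable_hardyAvg (g : ℝ → ℝ≥0) : Measurable (hardyAvg g) := by
  have h : Monotone fun t : ℝ => ∫⁻ u in Ioc (0 : ℝ) t, (g u : ℝ≥0∞) := fun a b hab =>
    lintegral_mono_set (Ioc_subset_Ioc_right hab)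
  exact ENNReal.measurable_ofReal.inv.mul h.measurable

/-- The identity for bounded antitone functions, in real integrals, by the fundamental theorem of
calculus applied to `t * (G t / t) ^ p` on `[0, δ]`. -/
lemma hardy_real {f : ℝ → ℝ} (hf : Antitone f) {C : ℝ} (h0 : ∀ u, 0 ≤ f u) (hC : ∀ u, f u ≤ C)
    {p δ : ℝ} (hp : 1 < p) (hδ : 0 < δ) :
    IntegrableOn (fun t => ((∫ u in (0 : ℝ)..t, f u) / t) ^ p) (Ioc 0 δ) ∧
    IntegrableOn (fun t => ((∫ u in (0 : ℝ)..t, f u) / t) ^ (p - 1) * f t) (Ioc 0 δ) ∧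
    (∫ t in Ioc 0 δ, ((∫ u in (0 : ℝ)..t, f u) / t) ^ p)
      + 1 / (p - 1) * (1 / δ ^ (p - 1)) * (∫ u in (0 : ℝ)..δ, f u) ^ p
    = p / (p - 1) * ∫ t in Ioc 0 δ, ((∫ u in (0 : ℝ)..t, f u) / t) ^ (p - 1) * f t := by
  have hi : ∀ a b, IntervalIntegrable f volume a b := fun a b => hf.intervalIntegrable
  set G : ℝ → ℝ := fun t => ∫ u in (0 : ℝ)..t, f u with hG
  have hGc : Continuous G := intervalIntegral.continuous_primitive hi 0
  have hG0 : ∀ t, 0 ≤ t → 0 ≤ G t := fun t ht =>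
    intervalIntegral.integral_nonneg ht fun u _ => h0 u
  have hGC : ∀ t, 0 ≤ t → G t ≤ C * t := fun t ht => by
    have := intervalIntegral.integral_mono_on ht (hi 0 t) (intervalIntegrable_const (c := C))
      fun u _ => hC u
    simpa [mul_comm] using this
  have hC0 : 0 ≤ C := (h0 0).trans (hC 0)
  have hA0 : ∀ t, 0 < t → 0 ≤ G t / t := fun t ht => div_nonneg (hG0 t ht.le) ht.le
  have hAC : ∀ t, 0 < t → G t / t ≤ C := fun t ht => (div_le_iff₀ ht).2 (hGC t ht.le)
  have hAm : Measurable fun t => G t / t := hGc.measurable.div measurable_id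
  have hI1 : IntegrableOn (fun t => (G t / t) ^ p) (Ioc 0 δ) := by
    refine Measure.integrableOn_of_bounded (M := C ^ p) (by simp)
      (hAm.pow_const p).aestronglyMeasurable ?_
    filter_upwards [ae_restrict_mem measurableSet_Ioc] with t ht
    rw [Real.norm_of_nonneg (Real.rpow_nonneg (hA0 t ht.1) _)]
    exact Real.rpow_le_rpow (hA0 t ht.1) (hAC t ht.1) (by linarith)
  have hI2 : IntegrableOn (fun t => (G t / t) ^ (p - 1) * f t) (Ioc 0 δ) := by
    refine Measure.integrableOn_of_bounded (M := C ^ (p - 1) * C) (by simp)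
      ((hAm.pow_const (p - 1)).mul hf.measurable).aestronglyMeasurable ?_
    filter_upwards [ae_restrict_mem measurableSet_Ioc] with t ht
    rw [Real.norm_of_nonneg (mul_nonneg (Real.rpow_nonneg (hA0 t ht.1) _) (h0 t))]
    exact mul_le_mul (Real.rpow_le_rpow (hA0 t ht.1) (hAC t ht.1) (by linarith)) (hC t) (h0 t)
      (Real.rpow_nonneg hC0 _)
  refine ⟨hI1, hI2, ?_⟩
  have key : ∀ t, 0 < t → t * (G t / t) ^ p = t ^ (1 - p) * G t ^ p := fun t ht => by
    rw [Real.div_rpow (hG0 t ht.le) ht.le, Real.rpow_sub ht, Real.rpow_one]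
    ring
  have ftc := integral_eq_of_hasDerivAt_off_countable_of_le
    (fun t => t * (G t / t) ^ p)
    (fun t => (1 - p) * (G t / t) ^ p + p * ((G t / t) ^ (p - 1) * f t)) hδ.le
    hf.countable_not_continuousAt ?_ ?_ ?_
  · rw [intervalIntegral.integral_of_le hδ.le, integral_add (hI1.const_mul _) (hI2.const_mul _),
      integral_const_mul, integral_const_mul] at ftc
    simp only [zero_mul, sub_zero] at ftc
    rw [key δ hδ, show (1 - p) = -(p - 1) by ring, Real.rpow_neg hδ.le] at ftc
    have hp' : p - 1 ≠ 0 := by linarith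
    change (∫ t in Ioc 0 δ, (G t / t) ^ p) + 1 / (p - 1) * (1 / δ ^ (p - 1)) * G δ ^ p
      = p / (p - 1) * ∫ t in Ioc 0 δ, (G t / t) ^ (p - 1) * f t
    rw [one_div (δ ^ _), mul_assoc, ← ftc]
    field_simp
    ring
  · intro t ht
    rcases ht.1.eq_or_lt with rfl | h
    · -- The average is bounded, so `t * (G t / t) ^ p` is squeezed between `0` and `t * C ^ p`.
      have hlim : Filter.Tendsto (fun t : ℝ => t * C ^ p) (nhdsWithin 0 (Icc 0 δ)) (nhds 0) := by
        have : Continuous fun t : ℝ => t * C ^ p := by fun_prop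
        simpa using (this.tendsto 0).mono_left nhdsWithin_le_nhds
      unfold ContinuousWithinAt
      simp only [zero_mul]
      refine squeeze_zero' ?_ ?_ hlim
      · filter_upwards [self_mem_nhdsWithin] with s hs
        exact mul_nonneg hs.1 (Real.rpow_nonneg (div_nonneg (hG0 s hs.1) hs.1) _)
      · filter_upwards [self_mem_nhdsWithin] with s hs
        rcases hs.1.eq_or_lt with rfl | h
        · simp
        · exact mul_le_mul_of_nonneg_left
            (Real.rpow_le_rpow (hA0 s h) (hAC s h) (by linarith)) h.le
    · refine ContinuousAt.continuousWithinAt ?_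
      exact continuousAt_id.mul ((hGc.continuousAt.div continuousAt_id h.ne').rpow_const
        (Or.inr (by linarith)))
  · rintro t ⟨ht, htc⟩
    have htc : ContinuousAt f t := not_not.1 htc
    have hGd : HasDerivAt G (f t) t := intervalIntegral.integral_hasDerivAt_right (hi 0 t)
      hf.measurable.stronglyMeasurable.stronglyMeasurableAtFilter htc
    have hd := (hasDerivAt_id t).mul
      ((hGd.div (hasDerivAt_id t) ht.1.ne').rpow_const (p := p) (Or.inr hp.le))
    refine hd.congr_deriv ?_
    have hne := ht.1.ne'
    have h1 : (G t / t) ^ p = (G t / t) ^ (p - 1) * (G t / t) := by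
      rcases (hA0 t ht.1).eq_or_lt with h | h
      · rw [← h, Real.zero_rpow (by linarith)]; simp
      · rw [← Real.rpow_add_one h.ne']; simp
    simp only [id, Pi.div_apply, h1]
    field_simp
    ring
  · rw [intervalIntegrable_iff_integrableOn_Ioc_of_le hδ.le]
    exact (hI1.const_mul _).add (hI2.const_mul _)

/-- `hardy_real` restated with `[0, ∞]`-valued integrals. -/
lemma hardy_bounded {g : ℝ → ℝ≥0} (hg : Antitone g) {C : ℝ≥0} (hC : ∀ u, g u ≤ C)
    {p δ : ℝ} (hp : 1 < p) (hδ : 0 < δ) :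
    (∫⁻ t in Ioc (0 : ℝ) δ, hardyAvg g t ^ p)
      + ENNReal.ofReal (1 / (p - 1)) * ENNReal.ofReal (1 / δ ^ (p - 1))
          * (∫⁻ u in Ioc (0 : ℝ) δ, (g u : ℝ≥0∞)) ^ p
    = ENNReal.ofReal (p / (p - 1))
        * ∫⁻ t in Ioc (0 : ℝ) δ, hardyAvg g t ^ (p - 1) * (g t : ℝ≥0∞) := by
  have hf : Antitone fun u => (g u : ℝ) := fun a b h => NNReal.coe_le_coe.2 (hg h)
  obtain ⟨h1, h2, h3⟩ := hardy_real hf (C := C) (fun u => (g u).2)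
    (fun u => NNReal.coe_le_coe.2 (hC u)) hp hδ
  have hp0 : 0 < p - 1 := by linarith
  have hG0 : ∀ t, 0 < t → 0 ≤ ∫ u in (0 : ℝ)..t, (g u : ℝ) := fun t ht =>
    intervalIntegral.integral_nonneg ht.le fun u _ => (g u).2
  have hG : ∀ t, 0 < t → ∫⁻ u in Ioc (0 : ℝ) t, (g u : ℝ≥0∞)
      = ENNReal.ofReal (∫ u in (0 : ℝ)..t, (g u : ℝ)) := fun t ht => by
    rw [intervalIntegral.integral_of_le ht.le, ofReal_integral_eq_lintegral_ofReal]
    · simp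
    · exact (intervalIntegrable_iff_integrableOn_Ioc_of_le ht.le).1 hf.intervalIntegrable
    · exact Filter.Eventually.of_forall fun u => (g u).2
  have hA0 : ∀ t, 0 < t → 0 ≤ (∫ u in (0 : ℝ)..t, (g u : ℝ)) / t := fun t ht =>
    div_nonneg (hG0 t ht) ht.le
  have hA : ∀ t, 0 < t → hardyAvg g t
      = ENNReal.ofReal ((∫ u in (0 : ℝ)..t, (g u : ℝ)) / t) := fun t ht => by
    rw [hardyAvg, hG t ht, ENNReal.ofReal_div_of_pos ht, ENNReal.div_eq_inv_mul]
  have e1 : ∫⁻ t in Ioc (0 : ℝ) δ, hardyAvg g t ^ p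
      = ENNReal.ofReal (∫ t in Ioc 0 δ, ((∫ u in (0 : ℝ)..t, (g u : ℝ)) / t) ^ p) := by
    rw [ofReal_integral_eq_lintegral_ofReal h1]
    · refine setLIntegral_congr_fun measurableSet_Ioc fun t ht => ?_
      simp only [hA t ht.1]
      rw [ENNReal.ofReal_rpow_of_nonneg (hA0 t ht.1) (by linarith)]
    · filter_upwards [ae_restrict_mem measurableSet_Ioc] with t ht
      exact Real.rpow_nonneg (hA0 t ht.1) _
  have e2 : ∫⁻ t in Ioc (0 : ℝ) δ, hardyAvg g t ^ (p - 1) * (g t : ℝ≥0∞)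
      = ENNReal.ofReal
        (∫ t in Ioc 0 δ, ((∫ u in (0 : ℝ)..t, (g u : ℝ)) / t) ^ (p - 1) * g t) := by
    rw [ofReal_integral_eq_lintegral_ofReal h2]
    · refine setLIntegral_congr_fun measurableSet_Ioc fun t ht => ?_
      simp only [hA t ht.1]
      rw [ENNReal.ofReal_rpow_of_nonneg (hA0 t ht.1) hp0.le,
        ENNReal.ofReal_mul (Real.rpow_nonneg (hA0 t ht.1) _), ENNReal.ofReal_coe_nnreal]
    · filter_upwards [ae_restrict_mem measurableSet_Ioc] with t ht
      exact mul_nonneg (Real.rpow_nonneg (hA0 t ht.1) _) (g t).2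
  have hδp : 0 ≤ 1 / δ ^ (p - 1) := by positivity
  rw [e1, e2, hG δ hδ, ENNReal.ofReal_rpow_of_nonneg (hG0 δ hδ) (by linarith),
    ← ENNReal.ofReal_mul (by positivity), ← ENNReal.ofReal_mul (by positivity),
    ← ENNReal.ofReal_mul (by positivity), ← ENNReal.ofReal_add, h3]
  · exact setIntegral_nonneg measurableSet_Ioc fun t ht => Real.rpow_nonneg (hA0 t ht.1) _
  · exact mul_nonneg (by positivity) (Real.rpow_nonneg (hG0 δ hδ) _)

/-- Lemma 1: the exact Hardy identity for non-increasing functions. -/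
theorem hardy_identity_antitone (g : ℝ → ℝ≥0)
    (hmono : AntitoneOn g (Set.Ioc (0 : ℝ) 1))
    (hint : (∫⁻ u in Set.Ioc (0 : ℝ) 1, (g u : ℝ≥0∞)) ≠ ⊤)
    (p δ : ℝ) (hp : 1 < p) (hδ : δ ∈ Set.Ioo (0 : ℝ) 1) :
    (∫⁻ t in Set.Ioc (0 : ℝ) δ, hardyAvg g t ^ p)
      + ENNReal.ofReal (1 / (p - 1)) * ENNReal.ofReal (1 / δ ^ (p - 1))
          * (∫⁻ u in Set.Ioc (0 : ℝ) δ, (g u : ℝ≥0∞)) ^ p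
    = ENNReal.ofReal (p / (p - 1))
        * ∫⁻ t in Set.Ioc (0 : ℝ) δ, hardyAvg g t ^ (p - 1) * (g t : ℝ≥0∞) := by
  have hp0 : 0 ≤ p := by linarith
  have hp1 : 0 ≤ p - 1 := by linarith
  -- Truncations of `g` at height `n`, extended to antitone functions on the whole line.
  let k : ℕ → ℝ → ℝ≥0 := fun n u => if u ≤ 0 then n else if u ≤ 1 then min (g u) n else 0
  have hk_anti : ∀ n, Antitone (k n) := by
    intro n a b hab
    simp only [k]
    split_ifs with h1 h2 h3 h4 h5 h6 <;> try first | exact le_rfl | exact zero_le | linarith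
    · exact min_le_right _ _
    · exact min_le_min_right _ (hmono ⟨not_le.1 ‹¬ a ≤ 0›, by linarith⟩
        ⟨not_le.1 ‹¬ b ≤ 0›, by linarith⟩ hab)
  have hk_le : ∀ n u, k n u ≤ n := by
    intro n u
    simp only [k]
    split_ifs <;> simp
  have hk_eq : ∀ n, ∀ u ∈ Ioc (0 : ℝ) 1, k n u = min (g u) n := fun n u hu => by
    simp [k, not_le.2 hu.1, hu.2]
  have hk_mono : ∀ u, Monotone fun n => (k n u : ℝ≥0∞) := by
    intro u m n hmn
    have : (m : ℝ≥0) ≤ n := by exact_mod_cast hmn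
    refine ENNReal.coe_le_coe.2 ?_
    simp only [k]
    split_ifs
    · exact this
    · exact min_le_min_left _ this
    · exact le_rfl
  have hk_meas : ∀ n, Measurable fun u => (k n u : ℝ≥0∞) := fun n =>
    (hk_anti n).measurable.coe_nnreal_ennreal
  have hk_tend : ∀ u ∈ Ioc (0 : ℝ) 1,
      Filter.Tendsto (fun n => (k n u : ℝ≥0∞)) Filter.atTop (nhds (g u)) := by
    intro u hu
    obtain ⟨N, hN⟩ := exists_nat_ge (g u)
    refine tendsto_const_nhds.congr' ?_
    filter_upwards [Filter.eventually_ge_atTop N] with n hn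
    rw [hk_eq n u hu, min_eq_left (hN.trans (by exact_mod_cast hn))]
  have hG_tend : ∀ t ≤ 1, Filter.Tendsto (fun n => ∫⁻ u in Ioc (0 : ℝ) t, (k n u : ℝ≥0∞))
      Filter.atTop (nhds (∫⁻ u in Ioc (0 : ℝ) t, (g u : ℝ≥0∞))) := by
    intro t ht
    refine lintegral_tendsto_of_tendsto_of_monotone (fun n => (hk_meas n).aemeasurable)
      (Filter.Eventually.of_forall hk_mono) ?_
    filter_upwards [ae_restrict_mem measurableSet_Ioc] with u hu
    exact hk_tend u ⟨hu.1, hu.2.trans ht⟩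
  have hA_mono : ∀ t, Monotone fun n => hardyAvg (k n) t := fun t m n hmn =>
    mul_le_mul_right (lintegral_mono fun u => hk_mono u hmn) _
  have hA_tend : ∀ t ∈ Ioc (0 : ℝ) δ,
      Filter.Tendsto (fun n => hardyAvg (k n) t) Filter.atTop (nhds (hardyAvg g t)) :=
    fun t ht => ENNReal.Tendsto.const_mul (hG_tend t (ht.2.trans hδ.2.le))
      (Or.inr (by simpa using ht.1))
  have hfin : ∀ t ∈ Ioc (0 : ℝ) δ, hardyAvg g t ≠ ⊤ := fun t ht =>
    ENNReal.mul_ne_top (by simpa using ht.1)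
      (ne_top_of_le_ne_top hint (lintegral_mono_set (Ioc_subset_Ioc_right (ht.2.trans hδ.2.le))))
  have T1 : Filter.Tendsto (fun n => ∫⁻ t in Ioc (0 : ℝ) δ, hardyAvg (k n) t ^ p)
      Filter.atTop (nhds (∫⁻ t in Ioc (0 : ℝ) δ, hardyAvg g t ^ p)) := by
    refine lintegral_tendsto_of_tendsto_of_monotone
      (fun n => ((measurable_hardyAvg _).pow_const p).aemeasurable)
      (Filter.Eventually.of_forall fun t m n hmn =>
        ENNReal.rpow_le_rpow (hA_mono t hmn) hp0) ?_
    filter_upwards [ae_restrict_mem measurableSet_Ioc] with t ht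
    exact (hA_tend t ht).ennrpow_const p
  have T2 : Filter.Tendsto
      (fun n => ∫⁻ t in Ioc (0 : ℝ) δ, hardyAvg (k n) t ^ (p - 1) * (k n t : ℝ≥0∞))
      Filter.atTop (nhds (∫⁻ t in Ioc (0 : ℝ) δ, hardyAvg g t ^ (p - 1) * (g t : ℝ≥0∞))) := by
    refine lintegral_tendsto_of_tendsto_of_monotone
      (fun n => (((measurable_hardyAvg _).pow_const (p - 1)).mul (hk_meas n)).aemeasurable)
      (Filter.Eventually.of_forall fun t m n hmn =>
        mul_le_mul' (ENNReal.rpow_le_rpow (hA_mono t hmn) hp1) (hk_mono t hmn)) ?_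
    filter_upwards [ae_restrict_mem measurableSet_Ioc] with t ht
    exact ENNReal.Tendsto.mul ((hA_tend t ht).ennrpow_const _) (Or.inr ENNReal.coe_ne_top)
      (hk_tend t ⟨ht.1, ht.2.trans hδ.2.le⟩)
      (Or.inr (ENNReal.rpow_ne_top_of_nonneg hp1 (hfin t ht)))
  refine tendsto_nhds_unique (T1.add (ENNReal.Tendsto.const_mul
    ((hG_tend δ hδ.2.le).ennrpow_const p) (Or.inr (by finiteness)))) ?_
  simp only [fun n => hardy_bounded (hk_anti n) (hk_le n) hp hδ.1]
  exact ENNReal.Tendsto.const_mul T2 (Or.inr ENNReal.ofReal_ne_top)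
end

section
/- Let q > 1, c ≥ 1, and let g : (0,1] → [0,∞) be non-increasing with g^q integrable, satisfying (1/t)∫₀^t g(u)^q du ≤ c · ((1/t)∫₀^t g(u) du)^q for every t ∈ (0,1]. Then for every p > q and every δ ∈ (0,1], (1/δ)∫₀^δ ((1/t)∫₀^t g(u) du)^{p−q} g(t)^q dt ≤ c · ((p−q)/p) · (1/δ)∫₀^δ ((1/t)∫₀^t g(u) du)^p dt + (q/p) · c · ((1/δ)∫₀^δ g(u) du)^p, where all integrals of nonnegative functions are taken with values in [0,∞]. -/
/-!
Write `A t = (1/t) ∫₀ᵗ g` and `H t = ∫₀ᵗ g ^ q`, so that `H t ≤ c * t * A t ^ q`. Being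
monotone, `g` is continuous off a countable set, where `A` and `H` are therefore differentiable, with
`H' = g ^ q` and `A' = (g - A) / t ≤ 0` by monotonicity of `g`. The function
`Φ = A ^ (p - q) * H - c * ((p - q) / p) * t * A ^ p` then satisfies
`Φ' - (A ^ (p - q) * g ^ q - c * ((p - q) / p) * A ^ p)
  = (p - q) * A ^ (p - q - 1) * A' * (H - c * t * A ^ q) ≥ 0`,
both `A'` and the last factor being nonpositive. Integrating over `(ε, δ]` and bounding `Φ δ` by the
reverse Hölder inequality once more gives `truncated_inequality`, with an extra boundary term
`c * ((p - q) / p) * ε * A ε ^ p`. Since `A` is non-increasing (`primitive_div_antitone`) this term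
is at most `c * ((p - q) / p) * ∫₀^ε A ^ p`, exactly the part missing from the integral of `A ^ p`.
So the right-hand side no longer depends on `ε`, and `ε → 0` is monotone convergence, with no
finiteness of `∫₀^δ A ^ p` needed.

Positivity of `A` is needed to differentiate its real powers; if some `A t` vanishes then `g = 0`
on `(0, 1]` and the left-hand side is `0`.
-/

open MeasureTheory Set
open scoped ENNReal NNReal

/-- The mean of a non-increasing function over `(0, t]` dominates its value at `t` (multiplied
through by `t`). -/
lemma mul_le_primitive (f : ℝ → ℝ) (hanti : AntitoneOn f (Ioc 0 1))
    (hf : IntervalIntegrable f volume 0 1) {t : ℝ} (ht : t ∈ Ioc (0 : ℝ) 1) :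
    t * f t ≤ ∫ u in (0 : ℝ)..t, f u := by
  have hi : IntervalIntegrable f volume 0 t :=
    hf.mono_set (by rw [uIcc_of_le ht.1.le, uIcc_of_le zero_le_one]; exact Icc_subset_Icc_right ht.2)
  have := intervalIntegral.integral_mono_on_of_le_Ioo (μ := volume) (f := fun _ => f t) (g := f)
    ht.1.le (by simp) hi
    (fun x hx => hanti ⟨hx.1, hx.2.le.trans ht.2⟩ ht hx.2.le)
  simpa using this

/-- The running mean of a non-increasing function is non-increasing. -/
lemma primitive_div_antitone (f : ℝ → ℝ) (hanti : AntitoneOn f (Ioc 0 1))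
    (hf : IntervalIntegrable f volume 0 1) :
    AntitoneOn (fun t => (∫ u in (0 : ℝ)..t, f u) / t) (Ioc 0 1) := by
  intro s hs t ht hst
  have hsub : ∀ {a b : ℝ}, 0 ≤ a → a ≤ b → b ≤ 1 → IntervalIntegrable f volume a b := by
    intro a b ha hab hb
    exact hf.mono_set
      (by rw [uIcc_of_le hab, uIcc_of_le zero_le_one]; exact Icc_subset_Icc ha hb)
  have h1 : ∫ u in s..t, f u ≤ (t - s) * f s := by
    have := intervalIntegral.integral_mono_on_of_le_Ioo (μ := volume) (f := f) (g := fun _ => f s)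
      hst (hsub hs.1.le hst ht.2) (by simp)
      (fun x hx => hanti hs ⟨hs.1.trans hx.1, hx.2.le.trans ht.2⟩ hx.1.le)
    simpa using this
  have h2 := mul_le_primitive f hanti hf hs
  have h3 := intervalIntegral.integral_add_adjacent_intervals
    (hsub le_rfl hs.1.le hs.2) (hsub hs.1.le hst ht.2)
  have h4 : s * ∫ u in s..t, f u ≤ s * ((t - s) * f s) := mul_le_mul_of_nonneg_left h1 hs.1.le
  have h5 : (t - s) * (s * f s) ≤ (t - s) * ∫ u in (0 : ℝ)..s, f u :=
    mul_le_mul_of_nonneg_left h2 (sub_nonneg.2 hst)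
  show (∫ u in (0 : ℝ)..t, f u) / t ≤ (∫ u in (0 : ℝ)..s, f u) / s
  rw [div_le_div_iff₀ ht.1 hs.1, ← h3]
  nlinarith

lemma hasDerivAt_primitive (f : ℝ → ℝ) (hf : IntervalIntegrable f volume 0 1) {t : ℝ}
    (ht : t ∈ Ioo (0 : ℝ) 1) (hc : ContinuousWithinAt f (Ioc 0 1) t) :
    HasDerivAt (fun s => ∫ u in (0 : ℝ)..s, f u) (f t) t := by
  have hn : Ioc (0 : ℝ) 1 ∈ nhds t := Ioc_mem_nhds ht.1 ht.2
  refine intervalIntegral.integral_hasDerivAt_right ?_ ?_ (hc.continuousAt hn)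
  · exact hf.mono_set
      (by rw [uIcc_of_le ht.1.le, uIcc_of_le zero_le_one]; exact Icc_subset_Icc_right ht.2.le)
  · exact ⟨Ioc 0 1, hn, hf.1.aestronglyMeasurable⟩

/-- The inequality on `(ε, δ]`: the truncation costs a boundary term at `ε`. It is obtained by
integrating `Φ' ≥ A ^ (p - q) * f ^ q - c * ((p - q) / p) * A ^ p` for
`Φ t = A t ^ (p - q) * ∫₀ᵗ f ^ q - c * ((p - q) / p) * t * A t ^ p`, `A` the running mean of `f`. -/
lemma truncated_inequality (f : ℝ → ℝ) (q p c ε δ : ℝ) (hq : 1 < q) (hqp : q < p) (hc : 1 ≤ c)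
    (hf0 : ∀ u, 0 ≤ f u) (hanti : AntitoneOn f (Ioc 0 1))
    (hf : IntervalIntegrable f volume 0 1)
    (hfq : IntervalIntegrable (fun u => f u ^ q) volume 0 1)
    (hpos : ∀ t ∈ Ioc (0 : ℝ) 1, 0 < ∫ u in (0 : ℝ)..t, f u)
    (hRH : ∀ t ∈ Ioc (0 : ℝ) 1,
      ∫ u in (0 : ℝ)..t, f u ^ q ≤ c * t * ((∫ u in (0 : ℝ)..t, f u) / t) ^ q)
    (hε : 0 < ε) (hεδ : ε ≤ δ) (hδ : δ ≤ 1) :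
    IntervalIntegrable (fun t => ((∫ u in (0 : ℝ)..t, f u) / t) ^ (p - q) * f t ^ q)
      volume ε δ ∧
    IntervalIntegrable (fun t => ((∫ u in (0 : ℝ)..t, f u) / t) ^ p) volume ε δ ∧
    ∫ t in ε..δ, ((∫ u in (0 : ℝ)..t, f u) / t) ^ (p - q) * f t ^ q
      ≤ c * ((p - q) / p) * (∫ t in ε..δ, ((∫ u in (0 : ℝ)..t, f u) / t) ^ p)
        + c * ((p - q) / p) * (ε * ((∫ u in (0 : ℝ)..ε, f u) / ε) ^ p)
        + q / p * c * (δ * ((∫ u in (0 : ℝ)..δ, f u) / δ) ^ p) := by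
  have hp : 0 < p := by linarith
  set G : ℝ → ℝ := fun t => ∫ u in (0 : ℝ)..t, f u with hG
  set H : ℝ → ℝ := fun t => ∫ u in (0 : ℝ)..t, f u ^ q with hH
  set A : ℝ → ℝ := fun t => G t / t with hA
  set k : ℝ := c * ((p - q) / p) with hk
  have hIcc : Icc ε δ ⊆ Ioc 0 1 := fun x hx => ⟨hε.trans_le hx.1, hx.2.trans hδ⟩
  have hu : uIcc ε δ = Icc ε δ := uIcc_of_le hεδ
  have hεm : ε ∈ Ioc (0 : ℝ) 1 := hIcc ⟨le_rfl, hεδ⟩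
  have hδm : δ ∈ Ioc (0 : ℝ) 1 := hIcc ⟨hεδ, le_rfl⟩
  have hu01 : uIcc ε δ ⊆ uIcc 0 1 := by
    rw [hu, uIcc_of_le zero_le_one]; exact Icc_subset_Icc hε.le hδ
  have hApos : ∀ t ∈ Ioc (0 : ℝ) 1, 0 < A t := fun t ht => div_pos (hpos t ht) ht.1
  have hprim : ∀ φ : ℝ → ℝ, IntervalIntegrable φ volume 0 1 →
      ContinuousOn (fun t => ∫ u in (0 : ℝ)..t, φ u) (uIcc ε δ) := by
    intro φ hφ
    refine (intervalIntegral.continuousOn_primitive_interval ?_).mono hu01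
    rw [uIcc_of_le zero_le_one, integrableOn_Icc_iff_integrableOn_Ioc]
    exact hφ.1
  have hGc : ContinuousOn G (uIcc ε δ) := hprim _ hf
  have hHc : ContinuousOn H (uIcc ε δ) := hprim _ hfq
  have hne : ∀ t ∈ uIcc ε δ, t ≠ 0 := fun t ht => (hIcc (hu ▸ ht)).1.ne'
  have hAc : ContinuousOn A (uIcc ε δ) := hGc.div continuousOn_id hne
  have hAr : ∀ r : ℝ, ContinuousOn (fun t => A t ^ r) (uIcc ε δ) := fun r =>
    hAc.rpow_const fun t ht => Or.inl (hApos t (hIcc (hu ▸ ht))).ne'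
  have hfi : IntervalIntegrable f volume ε δ := hf.mono_set hu01
  have hfqi : IntervalIntegrable (fun u => f u ^ q) volume ε δ := hfq.mono_set hu01
  have hI1 : IntervalIntegrable (fun t => A t ^ (p - q) * f t ^ q) volume ε δ :=
    hfqi.continuousOn_mul (hAr _)
  have hI2 : IntervalIntegrable (fun t => A t ^ p) volume ε δ := (hAr p).intervalIntegrable
  refine ⟨hI1, hI2, ?_⟩
  set A' : ℝ → ℝ := fun t => (f t * t - G t * 1) / t ^ 2 with hA'
  have hA'i : IntervalIntegrable A' volume ε δ := by
    have : IntervalIntegrable (fun t => (f t * t - G t * 1) * (t ^ 2)⁻¹) volume ε δ := by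
      refine IntervalIntegrable.mul_continuousOn ?_ ?_
      · exact (hfi.mul_continuousOn continuousOn_id).sub
          (hGc.mul continuousOn_const).intervalIntegrable
      · exact (continuousOn_id.pow 2).inv₀ fun t ht => pow_ne_zero 2 (hne t ht)
    simpa only [hA', div_eq_mul_inv] using this
  have hA'0 : ∀ t ∈ Ioc (0 : ℝ) 1, A' t ≤ 0 := fun t ht =>
    div_nonpos_of_nonpos_of_nonneg
      (by have := mul_le_primitive f hanti hf ht; simp only [hG]; linarith) (sq_nonneg t)
  set Φ : ℝ → ℝ := fun t => A t ^ (p - q) * H t - k * (t * A t ^ p) with hΦ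
  set Φ' : ℝ → ℝ := fun t =>
    (A' t * (p - q) * A t ^ (p - q - 1) * H t + A t ^ (p - q) * f t ^ q)
      - k * (1 * A t ^ p + t * (A' t * p * A t ^ (p - 1))) with hΦ'
  have hΦc : ContinuousOn Φ (uIcc ε δ) :=
    ((hAr _).mul hHc).sub (continuousOn_const.mul (continuousOn_id.mul (hAr _)))
  have hΦ'i : IntervalIntegrable Φ' volume ε δ := by
    refine IntervalIntegrable.sub (IntervalIntegrable.add ?_ hI1)
      (IntervalIntegrable.const_mul (IntervalIntegrable.add ?_ ?_) k)
    · exact ((hA'i.mul_const _).mul_continuousOn (hAr _)).mul_continuousOn hHc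
    · exact hI2.const_mul 1
    · exact ((hA'i.mul_const _).mul_continuousOn (hAr _)).continuousOn_mul continuousOn_id
  have hcount := hanti.countable_not_continuousWithinAt
  have hFTC : ∫ t in ε..δ, Φ' t = Φ δ - Φ ε := by
    refine integral_eq_of_hasDerivAt_off_countable Φ Φ' hcount hΦc ?_ hΦ'i
    rintro t ⟨ht, htn⟩
    rw [min_eq_left hεδ, max_eq_right hεδ] at ht
    have htm : t ∈ Ioc (0 : ℝ) 1 := hIcc ⟨ht.1.le, ht.2.le⟩
    have htm' : t ∈ Ioo (0 : ℝ) 1 := ⟨htm.1, ht.2.trans_le hδ⟩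
    have hct : ContinuousWithinAt f (Ioc 0 1) t := by
      by_contra h
      exact htn ⟨htm, h⟩
    have dG : HasDerivAt G (f t) t := hasDerivAt_primitive f hf htm' hct
    have dH : HasDerivAt H (f t ^ q) t := hasDerivAt_primitive (fun u => f u ^ q) hfq htm'
      (hct.rpow_const (Or.inr (by linarith)))
    have dA : HasDerivAt A (A' t) t := dG.div (hasDerivAt_id t) htm.1.ne'
    have hA0 : A t ≠ 0 := (hApos t htm).ne'
    exact ((dA.rpow_const (Or.inl hA0)).mul dH).sub
      (((hasDerivAt_id t).mul (dA.rpow_const (Or.inl hA0))).const_mul k)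
  have hmono : ∫ t in ε..δ, (A t ^ (p - q) * f t ^ q - k * A t ^ p) ≤ ∫ t in ε..δ, Φ' t := by
    refine intervalIntegral.integral_mono_on hεδ (hI1.sub (hI2.const_mul k)) hΦ'i ?_
    intro t ht
    have htm := hIcc ht
    have hAt := hApos t htm
    -- The remainder is `A' (p - q) A ^ (p - q - 1) (H - c t A ^ q)`, a product with two
    -- nonpositive factors.
    have e1 : A t ^ (p - 1) = A t ^ (p - q - 1) * A t ^ q := by
      rw [← Real.rpow_add hAt]; congr 1; ring
    have e2 : k * p = c * (p - q) := by rw [hk]; field_simp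
    have h1 : 0 ≤ -A' t * ((p - q) * A t ^ (p - q - 1)) * (c * t * A t ^ q - H t) :=
      mul_nonneg (mul_nonneg (neg_nonneg.2 (hA'0 t htm))
        (mul_nonneg (by linarith) (Real.rpow_nonneg hAt.le _))) (sub_nonneg.2 (hRH t htm))
    have h2 : Φ' t - (A t ^ (p - q) * f t ^ q - k * A t ^ p)
        = A' t * (p - q) * A t ^ (p - q - 1) * H t - (k * p) * t * A' t * A t ^ (p - 1) := by
      simp only [hΦ']; ring
    rw [← sub_nonneg, h2, e1, e2]
    linarith
  rw [intervalIntegral.integral_sub hI1 (hI2.const_mul k),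
    intervalIntegral.integral_const_mul, hFTC] at hmono
  have hΦδ : Φ δ ≤ q / p * c * (δ * A δ ^ p) := by
    have hAδ := hApos δ hδm
    have e : A δ ^ p = A δ ^ (p - q) * A δ ^ q := by
      rw [← Real.rpow_add hAδ]; congr 1; ring
    have h1 := mul_le_mul_of_nonneg_left (hRH δ hδm) (Real.rpow_nonneg hAδ.le (p - q))
    have h2 : q / p * c = c - k := by rw [hk]; field_simp; ring
    simp only [hΦ]
    rw [h2]
    have h3 : A δ ^ (p - q) * (c * δ * A δ ^ q) = c * (δ * A δ ^ p) := by rw [e]; ring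
    have h1' : A δ ^ (p - q) * H δ ≤ A δ ^ (p - q) * (c * δ * A δ ^ q) := h1
    linarith
  have hΦε : -(k * (ε * A ε ^ p)) ≤ Φ ε := by
    have : 0 ≤ A ε ^ (p - q) * H ε :=
      mul_nonneg (Real.rpow_nonneg (hApos ε hεm).le _)
        (intervalIntegral.integral_nonneg hε.le fun u _ => Real.rpow_nonneg (hf0 u) q)
    simp only [hΦ]
    linarith
  linarith

/-- On `(0, 1]`, `hardyAvg` is the real running mean of an integrable function. -/
lemma hardyAvg_eq_ofReal (φ : ℝ → ℝ≥0)
    (hφ : IntervalIntegrable (fun u => (φ u : ℝ)) volume 0 1) {t : ℝ} (ht : t ∈ Ioc (0 : ℝ) 1) :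
    hardyAvg φ t = ENNReal.ofReal ((∫ u in (0 : ℝ)..t, (φ u : ℝ)) / t) := by
  have hi : IntegrableOn (fun u => (φ u : ℝ)) (Ioc 0 t) :=
    hφ.1.mono_set (Ioc_subset_Ioc_right ht.2)
  rw [hardyAvg, ENNReal.ofReal_div_of_pos ht.1, intervalIntegral.integral_of_le ht.1.le,
    ofReal_integral_eq_lintegral_ofReal hi (Filter.Eventually.of_forall fun u => (φ u).2),
    div_eq_mul_inv, mul_comm]
  simp only [ENNReal.ofReal_coe_nnreal]

lemma ofReal_intervalIntegral {φ : ℝ → ℝ} {a b : ℝ} (hab : a ≤ b)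
    (hφ : IntervalIntegrable φ volume a b) (h0 : ∀ x ∈ Ioc a b, 0 ≤ φ x) :
    ENNReal.ofReal (∫ x in a..b, φ x) = ∫⁻ x in Ioc a b, ENNReal.ofReal (φ x) := by
  rw [intervalIntegral.integral_of_le hab]
  refine ofReal_integral_eq_lintegral_ofReal hφ.1 ?_
  filter_upwards [ae_restrict_mem measurableSet_Ioc] with x hx using h0 x hx

/-- Monotone convergence for the lower endpoint of an interval. -/
lemma lintegral_Ioc_le_of_forall (F : ℝ → ℝ≥0∞) (δ : ℝ) (hδ : 0 < δ) (M : ℝ≥0∞)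
    (h : ∀ ε, 0 < ε → ε ≤ δ → ∫⁻ t in Ioc ε δ, F t ≤ M) : ∫⁻ t in Ioc 0 δ, F t ≤ M := by
  have hU : Ioc (0 : ℝ) δ = ⋃ n : ℕ, Ioc (δ / (n + 1)) δ := by
    ext x
    simp only [mem_Ioc, mem_iUnion]
    constructor
    · rintro ⟨h0, h1⟩
      obtain ⟨n, hn⟩ := exists_nat_gt (δ / x)
      refine ⟨n, ?_, h1⟩
      rw [div_lt_iff₀ h0] at hn
      rw [div_lt_iff₀ (by positivity)]
      linarith
    · rintro ⟨n, h0, h1⟩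
      exact ⟨lt_trans (by positivity) h0, h1⟩
  have hmono : Monotone fun n : ℕ => Ioc (δ / ((n : ℝ) + 1)) δ := by
    intro m n hmn
    refine Ioc_subset_Ioc_left ?_
    have : (m : ℝ) ≤ n := by exact_mod_cast hmn
    gcongr
  rw [hU, setLIntegral_iUnion_of_directed _ hmono.directed_le]
  refine iSup_le fun n => h _ (by positivity) ?_
  rw [div_le_iff₀ (by positivity)]
  nlinarith [(Nat.cast_nonneg n : (0 : ℝ) ≤ n)]

/-- Intermediate inequality in the proof of Theorem 3, combining the exact Hardy
identity for `g^q` with the monotonicity of `φ_y`. -/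
theorem reverse_holder_intermediate (q c : ℝ) (hq : 1 < q) (hc : 1 ≤ c)
    (g : ℝ → ℝ≥0) (hmono : AntitoneOn g (Set.Ioc (0 : ℝ) 1))
    (hint : (∫⁻ u in Set.Ioc (0 : ℝ) 1, ((g u : ℝ≥0∞)) ^ q) ≠ ⊤)
    (hRH : ∀ t ∈ Set.Ioc (0 : ℝ) 1,
        hardyAvg (fun u => g u ^ q) t ≤ ENNReal.ofReal c * hardyAvg g t ^ q) :
    ∀ p : ℝ, q < p → ∀ δ ∈ Set.Ioc (0 : ℝ) 1,
      (ENNReal.ofReal δ)⁻¹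
          * ∫⁻ t in Set.Ioc (0 : ℝ) δ, hardyAvg g t ^ (p - q) * (g t : ℝ≥0∞) ^ q
      ≤ ENNReal.ofReal c * ENNReal.ofReal ((p - q) / p)
            * ((ENNReal.ofReal δ)⁻¹
                * ∫⁻ t in Set.Ioc (0 : ℝ) δ, hardyAvg g t ^ p)
        + ENNReal.ofReal (q / p) * ENNReal.ofReal c * hardyAvg g δ ^ p := by
  intro p hqp δ hδ
  have hq0 : 0 < q := by linarith
  have hp : 0 < p := by linarith
  have hδ0 : ENNReal.ofReal δ ≠ 0 := by simpa using hδ.1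
  set f : ℝ → ℝ := fun u => (g u : ℝ) with hf_def
  have hf0 : ∀ u, 0 ≤ f u := fun u => (g u).2
  have hanti : AntitoneOn f (Ioc 0 1) := fun x hx y hy hxy => NNReal.coe_le_coe.2 (hmono hx hy hxy)
  have hgq : ∀ u, (g u : ℝ≥0∞) ^ q = ENNReal.ofReal (f u ^ q) := fun u => by
    rw [← ENNReal.ofReal_rpow_of_nonneg (hf0 u) hq0.le, hf_def, ENNReal.ofReal_coe_nnreal]
  have hfm : AEMeasurable f (volume.restrict (Ioc 0 1)) :=
    aemeasurable_restrict_of_antitoneOn measurableSet_Ioc hanti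
  have hfq1 : IntegrableOn (fun u => f u ^ q) (Ioc 0 1) := by
    refine ⟨(hfm.pow_const q).aestronglyMeasurable, ?_⟩
    rw [hasFiniteIntegral_iff_ofReal
      (Filter.Eventually.of_forall fun u => Real.rpow_nonneg (hf0 u) q)]
    simpa only [hgq] using hint.lt_top
  have hfq : IntervalIntegrable (fun u => f u ^ q) volume 0 1 :=
    (intervalIntegrable_iff_integrableOn_Ioc_of_le zero_le_one).2 hfq1
  have hf1 : IntegrableOn f (Ioc 0 1) := by
    have h1 : IntegrableOn (fun _ : ℝ => (1 : ℝ)) (Ioc 0 1) := by simp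
    refine (h1.add hfq1).mono' hfm.aestronglyMeasurable (Filter.Eventually.of_forall fun u => ?_)
    rw [Real.norm_of_nonneg (hf0 u)]
    show f u ≤ 1 + f u ^ q
    rcases le_total (f u) 1 with h | h
    · linarith [Real.rpow_nonneg (hf0 u) q]
    · linarith [Real.self_le_rpow_of_one_le h hq.le]
  have hf : IntervalIntegrable f volume 0 1 :=
    (intervalIntegrable_iff_integrableOn_Ioc_of_le zero_le_one).2 hf1
  by_cases hpos : ∀ t ∈ Ioc (0 : ℝ) 1, 0 < ∫ u in (0 : ℝ)..t, f u
  swap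
  · -- If a mean vanishes, then so does `g` on `(0, 1]`, and the left-hand side is `0`.
    push Not at hpos
    obtain ⟨t, ht, hGt⟩ := hpos
    have hgt : ∀ x ∈ Ioc (0 : ℝ) 1, g x = 0 := by
      intro x hx
      have hsx : ∀ s, 0 < s → s ≤ t → f s ≤ 0 := by
        intro s hs hst
        have h1 := mul_le_primitive f hanti hf ⟨hs, hst.trans ht.2⟩
        have h2 : ∫ u in (0 : ℝ)..s, f u ≤ ∫ u in (0 : ℝ)..t, f u :=
          intervalIntegral.integral_mono_interval le_rfl hs.le hst
            (Filter.Eventually.of_forall hf0)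
            (hf.mono_set (by
              rw [uIcc_of_le ht.1.le, uIcc_of_le zero_le_one]; exact Icc_subset_Icc_right ht.2))
        by_contra hlt
        have := mul_pos hs (not_le.1 hlt)
        linarith
      have hm : min x t ∈ Ioc (0 : ℝ) 1 := ⟨lt_min hx.1 ht.1, (min_le_left _ _).trans hx.2⟩
      have h3 := (hanti hm hx (min_le_left _ _)).trans (hsx _ hm.1 (min_le_right _ _))
      exact NNReal.coe_eq_zero.1 (le_antisymm h3 (hf0 x))
    have hz : ∫⁻ t in Ioc (0 : ℝ) δ, hardyAvg g t ^ (p - q) * (g t : ℝ≥0∞) ^ q = 0 := by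
      rw [setLIntegral_congr_fun (g := fun _ => 0) measurableSet_Ioc, lintegral_zero]
      intro x hx
      simp [hgt x ⟨hx.1, hx.2.trans hδ.2⟩, ENNReal.zero_rpow_of_pos hq0]
    rw [hz, mul_zero]
    exact zero_le
  set A : ℝ → ℝ := fun t => (∫ u in (0 : ℝ)..t, f u) / t with hA
  have hApos : ∀ t ∈ Ioc (0 : ℝ) 1, 0 < A t := fun t ht => div_pos (hpos t ht) ht.1
  have hAvg : ∀ t ∈ Ioc (0 : ℝ) 1, hardyAvg g t = ENNReal.ofReal (A t) :=
    fun t ht => hardyAvg_eq_ofReal g hf ht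
  have hAvgr : ∀ r : ℝ, ∀ t ∈ Ioc (0 : ℝ) 1, hardyAvg g t ^ r = ENNReal.ofReal (A t ^ r) :=
    fun r t ht => by rw [hAvg t ht, ENNReal.ofReal_rpow_of_pos (hApos t ht)]
  have hRH' : ∀ t ∈ Ioc (0 : ℝ) 1,
      ∫ u in (0 : ℝ)..t, f u ^ q ≤ c * t * ((∫ u in (0 : ℝ)..t, f u) / t) ^ q := by
    intro t ht
    have h := hRH t ht
    rw [hardyAvg_eq_ofReal (fun u => g u ^ q) (by simpa only [NNReal.coe_rpow] using hfq) ht,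
      hAvgr q t ht, ← ENNReal.ofReal_mul (by linarith), ENNReal.ofReal_le_ofReal_iff
        (mul_nonneg (by linarith) (Real.rpow_nonneg (hApos t ht).le q)), div_le_iff₀ ht.1] at h
    simp only [NNReal.coe_rpow] at h
    calc _ ≤ _ := h
      _ = _ := by ring
  have hk : 0 ≤ c * ((p - q) / p) := mul_nonneg (by linarith) (div_nonneg (by linarith) hp.le)
  have hqc : 0 ≤ q / p * c := mul_nonneg (div_nonneg hq0.le hp.le) (by linarith)
  have key : ∫⁻ t in Ioc (0 : ℝ) δ, hardyAvg g t ^ (p - q) * (g t : ℝ≥0∞) ^ q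
      ≤ ENNReal.ofReal (c * ((p - q) / p)) * (∫⁻ t in Ioc (0 : ℝ) δ, hardyAvg g t ^ p)
        + ENNReal.ofReal (q / p * c) * (ENNReal.ofReal δ * hardyAvg g δ ^ p) := by
    refine lintegral_Ioc_le_of_forall _ δ hδ.1 _ fun ε hε hεδ => ?_
    have hsub : Ioc ε δ ⊆ Ioc 0 1 := Ioc_subset_Ioc hε.le hδ.2
    have hεm : ε ∈ Ioc (0 : ℝ) 1 := ⟨hε, hεδ.trans hδ.2⟩
    obtain ⟨hI1, hI2, hle⟩ := truncated_inequality f q p c ε δ hq hqp hc hf0 hanti hf hfq hpos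
      hRH' hε hεδ hδ.2
    have hL : ∫⁻ t in Ioc ε δ, hardyAvg g t ^ (p - q) * (g t : ℝ≥0∞) ^ q
        = ENNReal.ofReal (∫ t in ε..δ, A t ^ (p - q) * f t ^ q) := by
      rw [ofReal_intervalIntegral hεδ hI1 fun t ht => mul_nonneg
        (Real.rpow_nonneg (hApos t (hsub ht)).le _) (Real.rpow_nonneg (hf0 t) _)]
      refine setLIntegral_congr_fun measurableSet_Ioc fun t ht => ?_
      rw [hAvgr _ t (hsub ht), hgq, ENNReal.ofReal_mul (Real.rpow_nonneg (hApos t (hsub ht)).le _)]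
    have hR : ∫⁻ t in Ioc ε δ, hardyAvg g t ^ p = ENNReal.ofReal (∫ t in ε..δ, A t ^ p) := by
      rw [ofReal_intervalIntegral hεδ hI2 fun t ht => Real.rpow_nonneg (hApos t (hsub ht)).le _]
      exact setLIntegral_congr_fun measurableSet_Ioc fun t ht => hAvgr p t (hsub ht)
    have hJ0 : 0 ≤ ∫ t in ε..δ, A t ^ p := intervalIntegral.integral_nonneg hεδ fun t ht =>
      Real.rpow_nonneg (hApos t ⟨hε.trans_le ht.1, ht.2.trans hδ.2⟩).le _
    have hAε := Real.rpow_nonneg (hApos ε hεm).le p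
    have hAδ := Real.rpow_nonneg (hApos δ hδ).le p
    -- As `A` is non-increasing, the boundary term at `ε` is absorbed by the integral over `(0, ε]`.
    have hbd : ENNReal.ofReal (ε * A ε ^ p) ≤ ∫⁻ t in Ioc (0 : ℝ) ε, hardyAvg g t ^ p := by
      calc ENNReal.ofReal (ε * A ε ^ p)
          = ∫⁻ _ in Ioc (0 : ℝ) ε, ENNReal.ofReal (A ε ^ p) := by
            rw [setLIntegral_const, Real.volume_Ioc, sub_zero, ENNReal.ofReal_mul hε.le, mul_comm]
        _ ≤ _ := by
            refine setLIntegral_mono' measurableSet_Ioc fun t ht => ?_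
            have htm : t ∈ Ioc (0 : ℝ) 1 := ⟨ht.1, ht.2.trans hεm.2⟩
            rw [hAvgr p t htm]
            exact ENNReal.ofReal_le_ofReal (Real.rpow_le_rpow (hApos ε hεm).le
              (primitive_div_antitone f hanti hf htm hεm ht.2) hp.le)
    have hsplit : ∫⁻ t in Ioc (0 : ℝ) δ, hardyAvg g t ^ p
        = (∫⁻ t in Ioc ε δ, hardyAvg g t ^ p) + ∫⁻ t in Ioc (0 : ℝ) ε, hardyAvg g t ^ p := by
      rw [add_comm, ← lintegral_union measurableSet_Ioc
        (by rw [Ioc_disjoint_Ioc]; simp [hεδ, hε.le]), Ioc_union_Ioc_eq_Ioc hε.le hεδ]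
    rw [hL]
    refine (ENNReal.ofReal_le_ofReal hle).trans ?_
    rw [ENNReal.ofReal_add (add_nonneg (mul_nonneg hk hJ0)
        (mul_nonneg hk (mul_nonneg hε.le hAε))) (mul_nonneg hqc (mul_nonneg hδ.1.le hAδ)),
      ENNReal.ofReal_add (mul_nonneg hk hJ0) (mul_nonneg hk (mul_nonneg hε.le hAε)),
      ENNReal.ofReal_mul hk, ENNReal.ofReal_mul hk, ENNReal.ofReal_mul hqc,
      ENNReal.ofReal_mul hδ.1.le, ← hAvgr p δ hδ, ← mul_add, hsplit, hR]
    gcongr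
  calc _ ≤ (ENNReal.ofReal δ)⁻¹ * _ := mul_le_mul_right key _
    _ = _ := by
      rw [mul_add, ← ENNReal.ofReal_mul (by linarith : 0 ≤ c),
        ← ENNReal.ofReal_mul (div_nonneg hq0.le hp.le)]
      congr 1
      · rw [mul_left_comm]
      · rw [mul_left_comm, ← mul_assoc (ENNReal.ofReal δ)⁻¹,
          ENNReal.inv_mul_cancel hδ0 ENNReal.ofReal_ne_top, one_mul]
end

section
/- Let q > 1, c ≥ 1, and let g : (0,1] → [0,∞) be non-increasing with g^q integrable, satisfying (1/t)∫₀^t g(u)^q du ≤ c · ((1/t)∫₀^t g(u) du)^q for every t ∈ (0,1]. Let p ≥ q be such that k_p := 1 − c · ((p−q)/p) · (p/(p−1))^q > 0. Then for every δ ∈ (0,1], (1/δ)∫₀^δ g(t)^p dt ≤ (q c /(p k_p)) · ((1/δ)∫₀^δ g(u) du)^p; in particular g ∈ L^p((0,1]). -/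
/-!
Write `A(t) = (1/t) ∫₀ᵗ g`, `E(t) = ∫₀ᵗ g ^ q`, `K = c ((p - q)/p) (p/(p - 1)) ^ q`, so that
`k_p = 1 - K`, and `M = c ((p - q)/p) (1 + q/(p - 1))`. The proof rests on the auxiliary function
`Ψ(t) = E(t) A(t) ^ (p - q) - M t A(t) ^ p`, which satisfies `k_p g ^ p ≤ Ψ'` wherever `g` is
continuous, that is, off a countable set.

To see this, use `t A' = g - A` to get
`Ψ' = g ^ q A ^ (p - q) + (p - q) (E/t) A ^ (p - q - 1) (g - A)
  - M (A ^ p + p A ^ (p - 1) (g - A))`.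
As `g ≤ A` by monotonicity and `E/t ≤ c A ^ q` by hypothesis, dividing by `A ^ p` and putting
`x = g/A ∈ [0, 1]` reduces the claim to a one-variable inequality, which is the tangent line
inequality for `x ↦ x ^ q` at `x = (p - 1)/p`, the ratio `g/A` of the power `t ^ (-1/p)`
(`pointwise_bound`).

Integrating over `[ε, δ]` gives `k_p ∫_ε^δ g ^ p ≤ Ψ(δ) - Ψ(ε)` (`integral_rpow_le`). Here
`Ψ(δ) ≤ (qc/p) δ A(δ) ^ p` by the reverse Hölder hypothesis, while `Ψ(ε) ≥ 0` because
`E(ε)/ε ≥ A(ε) ^ q` by Jensen (`jensen_hardy`) and `M ≤ K ≤ 1` by Bernoulli (`weight_le_one`).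
The bound does not depend on `ε`, so monotone convergence as `ε → 0` gives both the inequality and
the finiteness of `∫ g ^ p`, with no a priori integrability of `g ^ p`.
-/

open MeasureTheory Set
open scoped ENNReal NNReal

/-! ### Scalar inequalities -/

/-- The convex function `y ↦ y ^ q` lies above its tangent line at `a`. -/
theorem rpow_tangent_le {q a y : ℝ} (hq : 1 ≤ q) (ha : 0 < a) (hy : 0 ≤ y) :
    a ^ q * (1 + q * (y / a - 1)) ≤ y ^ q := by
  have h := one_add_mul_self_le_rpow_one_add (s := y / a - 1)
    (by have : 0 ≤ y / a := by positivity
        linarith) hq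
  have h2 : (1 + (y / a - 1)) ^ q = y ^ q / a ^ q := by
    rw [← Real.div_rpow hy ha.le]; congr 1; ring
  have h3 : 0 < a ^ q := by positivity
  rw [h2, le_div_iff₀ h3] at h
  linarith

/-- The inequality `k_p g ^ p ≤ Ψ'` at a single point, with `a`, `y`, `h` standing for `A`, `g` and
`E/t`. The constant `c ((p - q)/p) (1 + q/(p - 1))` is the one for which, when `a = 1`, `y = x` and
`h = c`, the right-hand side equals `x ^ q - c ((p - q)/p) (1 + q (x/x₀ - 1))` with
`x₀ = (p - 1)/p`, and `1 + q (x/x₀ - 1) ≤ (x/x₀) ^ q` by convexity. -/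
theorem pointwise_bound {q c p a y h : ℝ} (hq : 1 < q) (hc : 1 ≤ c) (hpq : q ≤ p)
    (hk : 0 ≤ 1 - c * ((p - q) / p) * (p / (p - 1)) ^ q)
    (ha : 0 < a) (hy : 0 ≤ y) (hya : y ≤ a) (hh : h ≤ c * a ^ q) :
    (1 - c * ((p - q) / p) * (p / (p - 1)) ^ q) * y ^ p ≤
      y ^ q * a ^ (p - q) + (p - q) * h * a ^ (p - q - 1) * (y - a)
        - c * ((p - q) / p) * (1 + q / (p - 1)) * (a ^ p + p * a ^ (p - 1) * (y - a)) := by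
  obtain ⟨x, rfl⟩ : ∃ x, y = x * a := ⟨y / a, by field_simp⟩
  have hx0 : 0 ≤ x := by
    by_contra! hx
    nlinarith
  have hx1 : x ≤ 1 := by
    by_contra! hx
    nlinarith
  have hp1 : 0 < p - 1 := by linarith
  have hp : 0 < p := by linarith
  have e1 : a ^ (p - q - 1) * (x * a - a) = a ^ (p - q) * (x - 1) := by
    rw [Real.rpow_sub_one ha.ne']; field_simp
  have e2 : a ^ (p - 1) * (x * a - a) = a ^ p * (x - 1) := by
    rw [Real.rpow_sub_one ha.ne']; field_simp
  have e3 : a ^ q * a ^ (p - q) = a ^ p := by rw [← Real.rpow_add ha]; congr 1; ring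
  have ht := rpow_tangent_le (q := q) (a := (p - 1) / p) (y := x) hq.le (by positivity) hx0
  have hinv : (p / (p - 1)) ^ q * ((p - 1) / p) ^ q = 1 := by
    rw [← Real.mul_rpow (by positivity) (by positivity)]
    rw [show p / (p - 1) * ((p - 1) / p) = 1 by field_simp]; simp
  have hxpq : x ^ p ≤ x ^ q := by
    rcases hx0.eq_or_lt with rfl | hx
    · rw [Real.zero_rpow (by linarith), Real.zero_rpow (by linarith)]
    · exact Real.rpow_le_rpow_of_exponent_ge hx hx1 hpq
  have hw : 0 ≤ c * ((p - q) / p) := by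
    have : 0 ≤ (p - q) / p := div_nonneg (by linarith) hp.le
    positivity
  have hK : c * ((p - q) / p) * (1 + q * (x / ((p - 1) / p) - 1)) ≤
      c * ((p - q) / p) * (p / (p - 1)) ^ q * x ^ q := by
    calc _ = c * ((p - q) / p) * ((p / (p - 1)) ^ q *
          (((p - 1) / p) ^ q * (1 + q * (x / ((p - 1) / p) - 1)))) := by
            rw [← mul_assoc ((p / (p - 1)) ^ q), hinv, one_mul]
      _ ≤ c * ((p - q) / p) * ((p / (p - 1)) ^ q * x ^ q) := by gcongr
      _ = _ := by ring
  have hid : c * ((p - q) / p) * (1 + q * (x / ((p - 1) / p) - 1)) =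
      c * ((p - q) / p) * (1 + q / (p - 1)) * (1 + p * (x - 1)) - (p - q) * c * (x - 1) := by
    field_simp
    ring
  -- The case `a = 1`, `h = c`; the general one follows by homogeneity and monotonicity in `h`.
  have hmain : (1 - c * ((p - q) / p) * (p / (p - 1)) ^ q) * x ^ p ≤
      x ^ q + (p - q) * c * (x - 1)
        - c * ((p - q) / p) * (1 + q / (p - 1)) * (1 + p * (x - 1)) := by
    have := mul_le_mul_of_nonneg_left hxpq hk
    linarith
  have hh' : (p - q) * (c * a ^ q) * a ^ (p - q) * (x - 1) ≤
      (p - q) * h * a ^ (p - q) * (x - 1) := by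
    apply mul_le_mul_of_nonpos_right _ (by linarith)
    have : 0 ≤ p - q := by linarith
    gcongr
  have hap : 0 < a ^ p := by positivity
  have hfin := mul_le_mul_of_nonneg_left hmain hap.le
  rw [Real.mul_rpow hx0 ha.le, Real.mul_rpow hx0 ha.le]
  calc _ = a ^ p * ((1 - c * ((p - q) / p) * (p / (p - 1)) ^ q) * x ^ p) := by ring
    _ ≤ _ := hfin
    _ = x ^ q * (a ^ q * a ^ (p - q)) + (p - q) * c * (a ^ q * a ^ (p - q)) * (x - 1)
        - c * ((p - q) / p) * (1 + q / (p - 1)) * (a ^ p + p * (a ^ p * (x - 1))) := by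
          rw [e3]; ring
    _ ≤ x ^ q * (a ^ q * a ^ (p - q)) + (p - q) * h * (a ^ (p - q) * (x - 1))
        - c * ((p - q) / p) * (1 + q / (p - 1)) * (a ^ p + p * (a ^ p * (x - 1))) := by
          linarith
    _ = _ := by rw [← e1, ← e2]; ring

/-- The weight of `t A ^ p` in `Ψ` is at most `1`, since by Bernoulli
`1 + q/(p - 1) ≤ (p/(p - 1)) ^ q`. -/
theorem weight_le_one {q c p : ℝ} (hq : 1 < q) (hc : 1 ≤ c) (hpq : q ≤ p)
    (hk : 0 ≤ 1 - c * ((p - q) / p) * (p / (p - 1)) ^ q) :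
    c * ((p - q) / p) * (1 + q / (p - 1)) ≤ 1 := by
  have hp1 : 0 < p - 1 := by linarith
  have hw : 0 ≤ c * ((p - q) / p) := by
    have : 0 ≤ (p - q) / p := div_nonneg (by linarith) (by linarith)
    positivity
  have h := one_add_mul_self_le_rpow_one_add (s := 1 / (p - 1))
    (by have : 0 ≤ 1 / (p - 1) := by positivity
        linarith) hq.le
  rw [show 1 + 1 / (p - 1) = p / (p - 1) by field_simp; ring,
    show q * (1 / (p - 1)) = q / (p - 1) by ring] at h
  have := mul_le_mul_of_nonneg_left h hw
  linarith

/-! ### Averages of a non-increasing function -/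

/-- A non-increasing function lies below its averages over `(0, t]`. -/
theorem le_hardy {f : ℝ → ℝ} (hmono : AntitoneOn f (Ioc 0 1))
    (hf : IntervalIntegrable f volume 0 1) {t : ℝ} (ht : t ∈ Ioc (0 : ℝ) 1) :
    f t ≤ (∫ u in (0 : ℝ)..t, f u) / t := by
  rw [le_div_iff₀ ht.1]
  have h := intervalIntegral.integral_mono_on_of_le_Ioo (a := 0) (b := t) (μ := volume)
    (f := fun _ => f t) (g := f) ht.1.le (by simp)
    (hf.mono_set (by rw [uIcc_of_le ht.1.le, uIcc_of_le zero_le_one]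
                     exact Icc_subset_Icc_right ht.2))
    (fun x hx => hmono ⟨hx.1, hx.2.le.trans ht.2⟩ ht hx.2.le)
  simp at h
  linarith

/-- Jensen's inequality for the average over `(0, t]`, by integrating the tangent line inequality
at the average itself. -/
theorem jensen_hardy {f : ℝ → ℝ} {q : ℝ} (hq : 1 < q) (h0 : ∀ t, 0 ≤ f t)
    (hf : IntervalIntegrable f volume 0 1)
    (hfq : IntervalIntegrable (fun u => f u ^ q) volume 0 1)
    {t : ℝ} (ht : t ∈ Ioc (0 : ℝ) 1) (hpos : 0 < ∫ u in (0 : ℝ)..t, f u) :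
    ((∫ u in (0 : ℝ)..t, f u) / t) ^ q ≤ (∫ u in (0 : ℝ)..t, f u ^ q) / t := by
  have hsub : uIcc 0 t ⊆ uIcc (0 : ℝ) 1 := by
    rw [uIcc_of_le ht.1.le, uIcc_of_le zero_le_one]
    exact Icc_subset_Icc_right ht.2
  have hft := hf.mono_set hsub
  set a := (∫ u in (0 : ℝ)..t, f u) / t with ha
  have ha0 : 0 < a := div_pos hpos ht.1
  rw [le_div_iff₀ ht.1]
  have hG : ∫ u in (0 : ℝ)..t, f u = a * t := by rw [ha]; field_simp [ht.1.ne']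
  have hi : IntervalIntegrable (fun u => f u / a - 1) volume 0 t :=
    (hft.div_const a).sub (by simp)
  have h := intervalIntegral.integral_mono_on (a := 0) (b := t) (μ := volume)
    (f := fun u => a ^ q * (1 + q * (f u / a - 1))) (g := fun u => f u ^ q) ht.1.le
    (((by simp : IntervalIntegrable (fun _ => (1 : ℝ)) volume 0 t).add
      (hi.const_mul q)).const_mul _)
    (hfq.mono_set hsub) (fun x _ => rpow_tangent_le hq.le ha0 (h0 x))
  rw [intervalIntegral.integral_const_mul, intervalIntegral.integral_add (by simp)
    (hi.const_mul q), intervalIntegral.integral_const_mul,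
    intervalIntegral.integral_sub (hft.div_const a) (by simp),
    intervalIntegral.integral_div, hG] at h
  have e : a * t / a = t := by field_simp
  simpa [e] using h

/-! ### The truncated estimate -/

/-- The estimate on `[ε, δ]`, with a bound independent of `ε`. Positivity of the averages makes
`A ^ (p - q)` differentiable even when `p - q < 1`. -/
theorem integral_rpow_le {f : ℝ → ℝ} {q c p : ℝ} (hq : 1 < q) (hc : 1 ≤ c) (hpq : q ≤ p)
    (hk : 0 ≤ 1 - c * ((p - q) / p) * (p / (p - 1)) ^ q)
    (h0 : ∀ t, 0 ≤ f t) (hmono : AntitoneOn f (Ioc 0 1))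
    (hf : IntervalIntegrable f volume 0 1)
    (hfq : IntervalIntegrable (fun u => f u ^ q) volume 0 1)
    (hpos : ∀ t ∈ Ioc (0 : ℝ) 1, 0 < ∫ u in (0 : ℝ)..t, f u)
    (hRH : ∀ t ∈ Ioc (0 : ℝ) 1,
      (∫ u in (0 : ℝ)..t, f u ^ q) / t ≤ c * ((∫ u in (0 : ℝ)..t, f u) / t) ^ q)
    {ε δ : ℝ} (hε : 0 < ε) (hεδ : ε ≤ δ) (hδ : δ ≤ 1) :
    (1 - c * ((p - q) / p) * (p / (p - 1)) ^ q) * ∫ t in ε..δ, f t ^ p ≤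
      q * c / p * (δ * ((∫ u in (0 : ℝ)..δ, f u) / δ) ^ p) := by
  have hp : 0 < p := by linarith
  have hp1 : 0 < p - 1 := by linarith
  set k := 1 - c * ((p - q) / p) * (p / (p - 1)) ^ q with hkdef
  set M := c * ((p - q) / p) * (1 + q / (p - 1)) with hM
  set G : ℝ → ℝ := fun t => ∫ u in (0 : ℝ)..t, f u with hG
  set E : ℝ → ℝ := fun t => ∫ u in (0 : ℝ)..t, f u ^ q with hE
  have hM1 : M ≤ 1 := weight_le_one hq hc hpq hk
  have hsub : Icc ε δ ⊆ Ioc 0 1 := fun x hx => ⟨hε.trans_le hx.1, hx.2.trans hδ⟩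
  have huIcc : uIcc ε δ = Icc ε δ := uIcc_of_le hεδ
  have hu01 : uIcc (0 : ℝ) 1 = Icc 0 1 := uIcc_of_le zero_le_one
  have hApos : ∀ t ∈ Ioc (0 : ℝ) 1, 0 < G t / t := fun t ht => div_pos (hpos t ht) ht.1
  have hsub' : Icc ε δ ⊆ Icc (0 : ℝ) 1 := hsub.trans Ioc_subset_Icc_self
  have hGc : ContinuousOn G (Icc ε δ) :=
    (hu01 ▸ intervalIntegral.continuousOn_primitive_interval' hf left_mem_uIcc).mono hsub'
  have hEc : ContinuousOn E (Icc ε δ) :=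
    (hu01 ▸ intervalIntegral.continuousOn_primitive_interval' hfq left_mem_uIcc).mono hsub'
  have hAc : ContinuousOn (fun t => G t / t) (Icc ε δ) :=
    hGc.div continuousOn_id (fun x hx => (hsub hx).1.ne')
  have hArc : ∀ r : ℝ, ContinuousOn (fun t => (G t / t) ^ r) (Icc ε δ) := fun r =>
    hAc.rpow_const (fun x hx => Or.inl (hApos x (hsub hx)).ne')
  have hmono' : AntitoneOn f (Icc ε δ) := hmono.mono hsub
  have hpowint : ∀ r : ℝ, 0 ≤ r → IntervalIntegrable (fun u => f u ^ r) volume ε δ := by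
    intro r hr
    apply AntitoneOn.intervalIntegrable
    rw [huIcc]
    exact fun x hx y hy hxy => Real.rpow_le_rpow (h0 _) (hmono' hx hy hxy) hr
  have hfi : IntervalIntegrable f volume ε δ :=
    AntitoneOn.intervalIntegrable (huIcc ▸ hmono')
  set Ψ : ℝ → ℝ := fun t => E t * (G t / t) ^ (p - q) - M * (t * (G t / t) ^ p) with hΨ
  set Ψ' : ℝ → ℝ := fun t => f t ^ q * (G t / t) ^ (p - q)
      + (p - q) * (E t / t) * (G t / t) ^ (p - q - 1) * (f t - G t / t)
      - M * ((G t / t) ^ p + p * (G t / t) ^ (p - 1) * (f t - G t / t)) with hΨ'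
  have hΨc : ContinuousOn Ψ (Icc ε δ) :=
    (hEc.mul (hArc _)).sub (continuousOn_const.mul (continuousOn_id.mul (hArc _)))
  have hdiff : IntervalIntegrable (fun t => f t - G t / t) volume ε δ :=
    hfi.sub (ContinuousOn.intervalIntegrable (huIcc ▸ hAc))
  have hΨi : IntervalIntegrable Ψ' volume ε δ := by
    refine (((hpowint q (by linarith)).mul_continuousOn (huIcc ▸ hArc _)).add
      (hdiff.continuousOn_mul ?_)).sub ((IntervalIntegrable.add
        (ContinuousOn.intervalIntegrable (huIcc ▸ hArc _))
        (hdiff.continuousOn_mul ?_)).const_mul _)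
    · rw [huIcc]
      exact (continuousOn_const.mul (hEc.div continuousOn_id
        (fun x hx => (hsub hx).1.ne'))).mul (hArc _)
    · rw [huIcc]
      exact continuousOn_const.mul (hArc _)
  have hderiv : ∀ x ∈ Ioo ε δ \ {x ∈ Icc ε δ | ¬ ContinuousWithinAt f (Icc ε δ) x},
      HasDerivAt Ψ (Ψ' x) x := by
    rintro x ⟨hx, hxn⟩
    have hxI : x ∈ Icc ε δ := Ioo_subset_Icc_self hx
    have hx1 := hsub hxI
    have hxc : ContinuousAt f x := by
      have : ContinuousWithinAt f (Icc ε δ) x := by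
        by_contra hcon
        exact hxn ⟨hxI, hcon⟩
      exact this.continuousAt (Icc_mem_nhds hx.1 hx.2)
    have hsubx : uIcc 0 x ⊆ uIcc (0 : ℝ) 1 := by
      rw [uIcc_of_le hx1.1.le, hu01]
      exact Icc_subset_Icc_right hx1.2
    have hnhds : Ioc (0 : ℝ) 1 ∈ nhds x :=
      Filter.mem_of_superset (Icc_mem_nhds hx.1 hx.2) hsub
    have hGd : HasDerivAt G (f x) x :=
      intervalIntegral.integral_hasDerivAt_right (hf.mono_set hsubx)
        ⟨_, hnhds, hf.1.aestronglyMeasurable⟩ hxc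
    have hEd : HasDerivAt E (f x ^ q) x :=
      intervalIntegral.integral_hasDerivAt_right (f := fun u => f u ^ q) (hfq.mono_set hsubx)
        ⟨_, hnhds, hfq.1.aestronglyMeasurable⟩
        (hxc.rpow_const (Or.inr (by linarith)))
    have hAx := hApos x hx1
    have hAd : HasDerivAt (fun t => G t / t) ((f x - G x / x) / x) x := by
      have hx0 := hx1.1.ne'
      refine (hGd.div (hasDerivAt_id' x) hx0).congr_deriv ?_
      field_simp
    have h1 := hEd.mul (hAd.rpow_const (p := p - q) (Or.inl hAx.ne'))
    have h2 := ((hasDerivAt_id' x).mul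
      (hAd.rpow_const (p := p) (Or.inl hAx.ne'))).const_mul M
    have hx0 := hx1.1.ne'
    refine (h1.sub h2).congr_deriv ?_
    simp only [hΨ']
    field_simp
  have hFTC := integral_eq_of_hasDerivAt_off_countable_of_le Ψ Ψ' hεδ
    hmono'.countable_not_continuousWithinAt hΨc hderiv hΨi
  have hle : ∫ t in ε..δ, k * f t ^ p ≤ ∫ t in ε..δ, Ψ' t :=
    intervalIntegral.integral_mono_on hεδ ((hpowint p hp.le).const_mul k) hΨi
      (fun x hx => pointwise_bound hq hc hpq hk (hApos x (hsub hx)) (h0 x)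
        (le_hardy hmono hf (hsub hx)) (hRH x (hsub hx)))
  have hadd : ∀ t ∈ Ioc (0 : ℝ) 1,
      (G t / t) ^ q * (G t / t) ^ (p - q) = (G t / t) ^ p := fun t ht => by
    rw [← Real.rpow_add (hApos t ht)]; congr 1; ring
  have hΨε : 0 ≤ Ψ ε := by
    have hεI : ε ∈ Ioc (0 : ℝ) 1 := hsub (left_mem_Icc.2 hεδ)
    have hJ := jensen_hardy hq h0 hf hfq hεI (hpos ε hεI)
    have hA := hApos ε hεI
    have e : Ψ ε = ε * (E ε / ε * (G ε / ε) ^ (p - q) - M * (G ε / ε) ^ p) := by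
      simp only [hΨ]; field_simp
    rw [e]
    apply mul_nonneg hε.le
    have h1 : (G ε / ε) ^ q * (G ε / ε) ^ (p - q) ≤ E ε / ε * (G ε / ε) ^ (p - q) :=
      mul_le_mul_of_nonneg_right hJ (by positivity)
    rw [hadd ε hεI] at h1
    have : M * (G ε / ε) ^ p ≤ 1 * (G ε / ε) ^ p :=
      mul_le_mul_of_nonneg_right hM1 (by positivity)
    linarith
  have hΨδ : Ψ δ ≤ q * c / p * (δ * (G δ / δ) ^ p) := by
    have hδI : δ ∈ Ioc (0 : ℝ) 1 := hsub (right_mem_Icc.2 hεδ)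
    have hδ0 := hδI.1
    have hA := hApos δ hδI
    have e : Ψ δ = δ * (E δ / δ * (G δ / δ) ^ (p - q) - M * (G δ / δ) ^ p) := by
      simp only [hΨ]; field_simp
    have h1 : E δ / δ * (G δ / δ) ^ (p - q) ≤ c * (G δ / δ) ^ q * (G δ / δ) ^ (p - q) :=
      mul_le_mul_of_nonneg_right (hRH δ hδI) (by positivity)
    rw [mul_assoc, hadd δ hδI] at h1
    -- This step discards the nonnegative term `c ((p - q)/p) (q/(p - 1))`.
    have hcM : c - M ≤ q * c / p := by
      have h2 : c * ((p - q) / p) = c - q * c / p := by field_simp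
      have h3 : 0 ≤ c * ((p - q) / p) * (q / (p - 1)) := by
        have : 0 ≤ (p - q) / p := div_nonneg (by linarith) hp.le
        positivity
      rw [hM]; linarith
    have h4 := mul_le_mul_of_nonneg_right hcM (by positivity : 0 ≤ (G δ / δ) ^ p)
    rw [e]
    calc _ ≤ δ * (q * c / p * (G δ / δ) ^ p) :=
          mul_le_mul_of_nonneg_left (by linarith) hδ0.le
      _ = _ := by ring
  rw [intervalIntegral.integral_const_mul, hFTC] at hle
  linarith

/-! ### Passage to `ℝ≥0∞`-valued integrals -/

theorem hardyAvg_eq {g : ℝ → ℝ≥0} {t : ℝ} (ht : 0 < t)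
    (hg : IntervalIntegrable (fun u => (g u : ℝ)) volume 0 t) :
    hardyAvg g t = ENNReal.ofReal ((∫ u in (0 : ℝ)..t, (g u : ℝ)) / t) := by
  rw [hardyAvg, intervalIntegral.integral_of_le ht.le, ENNReal.ofReal_div_of_pos ht,
    ofReal_integral_eq_lintegral_ofReal hg.1 (Filter.Eventually.of_forall fun u => (g u).2),
    ENNReal.div_eq_inv_mul]
  simp

/-- Monotone convergence along `(δ/(n + 1), δ] ↑ (0, δ]`. -/
theorem lintegral_Ioc_le {F : ℝ → ℝ≥0∞} {δ : ℝ} {C : ℝ≥0∞}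
    (h : ∀ ε, 0 < ε → ε ≤ δ → ∫⁻ t in Ioc ε δ, F t ≤ C) (hδ : 0 < δ) :
    ∫⁻ t in Ioc 0 δ, F t ≤ C := by
  have hU : Ioc 0 δ = ⋃ n : ℕ, Ioc (δ / (n + 1)) δ := by
    ext x
    simp only [mem_iUnion, mem_Ioc]
    constructor
    · rintro ⟨hx0, hx⟩
      obtain ⟨n, hn⟩ := exists_nat_gt (δ / x)
      refine ⟨n, ?_, hx⟩
      rw [div_lt_iff₀ hx0] at hn
      rw [div_lt_iff₀ (by positivity)]
      nlinarith
    · rintro ⟨n, hn, hx⟩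
      exact ⟨lt_trans (by positivity) hn, hx⟩
  rw [hU, setLIntegral_iUnion_of_directed]
  · refine iSup_le fun n => h _ (by positivity) (div_le_self hδ.le (by simp))
  · apply Monotone.directed_le
    intro m n hmn
    apply Ioc_subset_Ioc_left
    have : (m : ℝ) ≤ n := by exact_mod_cast hmn
    gcongr

/-- Theorem 3: a non-increasing function satisfying a reverse Hölder inequality with
exponent `q` and constant `c` on all intervals `(0,t]` satisfies a reverse Hölder
inequality with exponent `p` and constant `qc/(p k_p)` whenever
`k_p = 1 − c((p−q)/p)(p/(p−1))^q > 0`; in particular `g ∈ L^p((0,1])`. -/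
theorem reverse_holder_self_improvement (q c : ℝ) (hq : 1 < q) (hc : 1 ≤ c)
    (g : ℝ → ℝ≥0) (hmono : AntitoneOn g (Set.Ioc (0 : ℝ) 1))
    (hint : (∫⁻ u in Set.Ioc (0 : ℝ) 1, ((g u : ℝ≥0∞)) ^ q) ≠ ⊤)
    (hRH : ∀ t ∈ Set.Ioc (0 : ℝ) 1,
        hardyAvg (fun u => g u ^ q) t ≤ ENNReal.ofReal c * hardyAvg g t ^ q)
    (p : ℝ) (hpq : q ≤ p)
    (hkp : 0 < 1 - c * ((p - q) / p) * (p / (p - 1)) ^ q) :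
    (∀ δ ∈ Set.Ioc (0 : ℝ) 1,
        (ENNReal.ofReal δ)⁻¹ * ∫⁻ t in Set.Ioc (0 : ℝ) δ, (g t : ℝ≥0∞) ^ p
        ≤ ENNReal.ofReal
              (q * c / (p * (1 - c * ((p - q) / p) * (p / (p - 1)) ^ q)))
            * hardyAvg g δ ^ p)
    ∧ (∫⁻ t in Set.Ioc (0 : ℝ) 1, (g t : ℝ≥0∞) ^ p) ≠ ⊤ := by
  have hp : 0 < p := by linarith
  have hq0 : 0 < q := by linarith
  have hp1 : 0 < p - 1 := by linarith
  -- If `g` vanishes identically both sides are `0`; otherwise all averages are positive.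
  by_cases hzero : ∀ t ∈ Ioc (0 : ℝ) 1, g t = 0
  · have hz : ∀ δ ∈ Ioc (0 : ℝ) 1, ∫⁻ t in Ioc (0 : ℝ) δ, (g t : ℝ≥0∞) ^ p = 0 := by
      intro δ hδ
      rw [setLIntegral_congr_fun (g := fun _ => 0) measurableSet_Ioc]
      · simp
      · intro t ht
        simp [hzero t ⟨ht.1, ht.2.trans hδ.2⟩, hp]
    exact ⟨fun δ hδ => by simp [hz δ hδ], by simp [hz 1 (by simp)]⟩
  push Not at hzero
  obtain ⟨t₀, ht₀, hgt₀⟩ := hzero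
  set f : ℝ → ℝ := fun u => (g u : ℝ) with hfdef
  have h0 : ∀ t, 0 ≤ f t := fun t => (g t).2
  have hmonof : AntitoneOn f (Ioc 0 1) := fun x hx y hy hxy => by
    exact_mod_cast hmono hx hy hxy
  have hmeas : AEMeasurable f (volume.restrict (Ioc 0 1)) :=
    aemeasurable_restrict_of_antitoneOn measurableSet_Ioc hmonof
  have hofReal : ∀ (r : ℝ), 0 ≤ r → ∀ t, ENNReal.ofReal (f t ^ r) = (g t : ℝ≥0∞) ^ r := by
    intro r hr t
    rw [← ENNReal.ofReal_rpow_of_nonneg (h0 t) hr, hfdef, ENNReal.ofReal_coe_nnreal]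
  have hfqI : IntegrableOn (fun u => f u ^ q) (Ioc 0 1) := by
    refine ⟨(hmeas.pow_const q).aestronglyMeasurable, ?_⟩
    rw [hasFiniteIntegral_iff_ofReal
      (Filter.Eventually.of_forall fun u => Real.rpow_nonneg (h0 u) q)]
    simp_rw [hofReal q hq0.le]
    exact lt_top_iff_ne_top.2 hint
  have hfI : IntegrableOn f (Ioc 0 1) := by
    refine Integrable.mono' (g := fun u => 1 + f u ^ q) ((integrable_const 1).add hfqI)
      hmeas.aestronglyMeasurable (Filter.Eventually.of_forall fun u => ?_)
    rw [Real.norm_of_nonneg (h0 u)]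
    rcases le_total (f u) 1 with h | h
    · have := Real.rpow_nonneg (h0 u) q
      linarith
    · have := Real.self_le_rpow_of_one_le h hq.le
      linarith
  have hf : IntervalIntegrable f volume 0 1 :=
    (intervalIntegrable_iff_integrableOn_Ioc_of_le zero_le_one).2 hfI
  have hfq : IntervalIntegrable (fun u => f u ^ q) volume 0 1 :=
    (intervalIntegrable_iff_integrableOn_Ioc_of_le zero_le_one).2 hfqI
  have hsub : ∀ t ∈ Ioc (0 : ℝ) 1, uIcc 0 t ⊆ uIcc (0 : ℝ) 1 := fun t ht => by
    rw [uIcc_of_le ht.1.le, uIcc_of_le zero_le_one]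
    exact Icc_subset_Icc_right ht.2
  have hft₀ : 0 < f t₀ := by
    have : 0 < g t₀ := pos_iff_ne_zero.2 hgt₀
    exact_mod_cast this
  have hpos : ∀ t ∈ Ioc (0 : ℝ) 1, 0 < ∫ u in (0 : ℝ)..t, f u := by
    intro t ht
    have hm : min t t₀ ∈ Ioc (0 : ℝ) 1 := ⟨lt_min ht.1 ht₀.1, (min_le_left _ _).trans ht.2⟩
    have h1 := hft₀.trans_le
      ((hmonof hm ht₀ (min_le_right _ _)).trans (le_hardy hmonof hf hm))
    have h2 : 0 < ∫ u in (0 : ℝ)..(min t t₀), f u := by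
      rwa [lt_div_iff₀ hm.1, zero_mul] at h1
    refine h2.trans_le (intervalIntegral.integral_mono_interval le_rfl hm.1.le
      (min_le_left _ _) (Filter.Eventually.of_forall h0) (hf.mono_set (hsub t ht)))
  have havg : ∀ t ∈ Ioc (0 : ℝ) 1,
      hardyAvg g t = ENNReal.ofReal ((∫ u in (0 : ℝ)..t, f u) / t) := fun t ht =>
    hardyAvg_eq ht.1 (hf.mono_set (hsub t ht))
  have hRH' : ∀ t ∈ Ioc (0 : ℝ) 1,
      (∫ u in (0 : ℝ)..t, f u ^ q) / t ≤ c * ((∫ u in (0 : ℝ)..t, f u) / t) ^ q := by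
    intro t ht
    have hA : 0 < (∫ u in (0 : ℝ)..t, f u) / t := div_pos (hpos t ht) ht.1
    have h := hRH t ht
    rw [havg t ht, hardyAvg_eq ht.1 (by simpa using hfq.mono_set (hsub t ht)),
      ENNReal.ofReal_rpow_of_nonneg hA.le hq0.le, ← ENNReal.ofReal_mul (by linarith),
      ENNReal.ofReal_le_ofReal_iff (by positivity)] at h
    simpa using h
  set k := 1 - c * ((p - q) / p) * (p / (p - 1)) ^ q with hk
  have hbound : ∀ δ ∈ Ioc (0 : ℝ) 1, ∫⁻ t in Ioc (0 : ℝ) δ, (g t : ℝ≥0∞) ^ p ≤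
      ENNReal.ofReal (δ * (q * c / (p * k) * ((∫ u in (0 : ℝ)..δ, f u) / δ) ^ p)) := by
    intro δ hδ
    refine lintegral_Ioc_le (fun ε hε hεδ => ?_) hδ.1
    have h := integral_rpow_le hq hc hpq hkp.le h0 hmonof hf hfq hpos hRH' hε hεδ hδ.2
    have hi : IntervalIntegrable (fun u => f u ^ p) volume ε δ := by
      apply AntitoneOn.intervalIntegrable
      rw [uIcc_of_le hεδ]
      exact fun x hx y hy hxy => Real.rpow_le_rpow (h0 _)
        (hmonof ⟨hε.trans_le hx.1, hx.2.trans hδ.2⟩ ⟨hε.trans_le hy.1, hy.2.trans hδ.2⟩ hxy)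
        hp.le
    simp_rw [← hofReal p hp.le]
    rw [← ofReal_integral_eq_lintegral_ofReal hi.1
      (Filter.Eventually.of_forall fun u => Real.rpow_nonneg (h0 u) p),
      ← intervalIntegral.integral_of_le hεδ]
    apply ENNReal.ofReal_le_ofReal
    rw [← hk, mul_comm, ← le_div_iff₀ hkp] at h
    refine h.trans_eq ?_
    field_simp
  refine ⟨fun δ hδ => ?_, ne_top_of_le_ne_top ENNReal.ofReal_ne_top (hbound 1 (by simp))⟩
  have hA : 0 < (∫ u in (0 : ℝ)..δ, f u) / δ := div_pos (hpos δ hδ) hδ.1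
  rw [havg δ hδ, ENNReal.ofReal_rpow_of_nonneg hA.le hp.le,
    ← ENNReal.ofReal_mul (by positivity), ← ENNReal.div_eq_inv_mul]
  refine ENNReal.div_le_of_le_mul' ?_
  rw [← ENNReal.ofReal_mul hδ.1.le]
  exact hbound δ hδ
end
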